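/- There exists a monoid homomorphism θ from the tied braid monoid TB_n^B of type B to the multiplicative monoid of the bt-algebra E_n^B(u,v) of type B determined by θ(σ_i) = T_i, θ(σ_i^{-1}) = T_i − (u − u^{-1})E_i, θ(ρ_1) = B_1, θ(ρ_1^{-1}) = B_1 − (v − v^{-1})F_1, θ(η_i) = E_i, and θ(φ_1) = F_1; i.e., these images satisfy all defining relations of TB_n^B. -/

import Mathlib

/-! The tied braid monoid of type B, `TBₙᴮ`, presented by generators and relations. -/

/-- Generators of the tied braid monoid of type B on `n` (moving) strands:
`sig i` is `σ_{i+1}`, `sigInv i` is `σ_{i+1}⁻¹`, `rho` is `ρ₁`, `rhoInv` is `ρ₁⁻¹`,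
`phi` is `φ₁` and `eta i` is `η_{i+1}` (for `i : Fin (n-1)`). -/
inductive TBGen (n : ℕ) : Type
  | sig : Fin (n - 1) → TBGen n
  | sigInv : Fin (n - 1) → TBGen n
  | rho : TBGen n
  | rhoInv : TBGen n
  | phi : TBGen n
  | eta : Fin (n - 1) → TBGen n

namespace TiedBraidB

variable (n : ℕ)

/-- The word `σᵢ` (for `1 ≤ i ≤ n-1`; junk value `1` otherwise). -/
def wσ (i : ℕ) : FreeMonoid (TBGen n) :=
  if h : 1 ≤ i ∧ i ≤ n - 1 then FreeMonoid.of (TBGen.sig ⟨i - 1, by omega⟩) else 1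

/-- The word `σᵢ⁻¹`. -/
def wσi (i : ℕ) : FreeMonoid (TBGen n) :=
  if h : 1 ≤ i ∧ i ≤ n - 1 then FreeMonoid.of (TBGen.sigInv ⟨i - 1, by omega⟩) else 1

/-- The word `ηᵢ`. -/
def wη (i : ℕ) : FreeMonoid (TBGen n) :=
  if h : 1 ≤ i ∧ i ≤ n - 1 then FreeMonoid.of (TBGen.eta ⟨i - 1, by omega⟩) else 1

/-- The word `ρ₁`. -/
def wρ : FreeMonoid (TBGen n) := FreeMonoid.of TBGen.rho

/-- The word `ρ₁⁻¹`. -/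
def wρi : FreeMonoid (TBGen n) := FreeMonoid.of TBGen.rhoInv

/-- The word `φ₁`. -/
def wφ : FreeMonoid (TBGen n) := FreeMonoid.of TBGen.phi

/-- The descending word `σₖ σₖ₋₁ ⋯ σ₁`. -/
def wσDesc : ℕ → FreeMonoid (TBGen n)
  | 0 => 1
  | k + 1 => wσ n (k + 1) * wσDesc k

/-- The ascending word `σ₁ σ₂ ⋯ σₖ`. -/
def wσAsc : ℕ → FreeMonoid (TBGen n)
  | 0 => 1
  | k + 1 => wσAsc k * wσ n (k + 1)

/-- The descending word `σₖ⁻¹ σₖ₋₁⁻¹ ⋯ σ₁⁻¹`. -/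
def wσiDesc : ℕ → FreeMonoid (TBGen n)
  | 0 => 1
  | k + 1 => wσi n (k + 1) * wσiDesc k

/-- The ascending word `σ₁⁻¹ σ₂⁻¹ ⋯ σₖ⁻¹`. -/
def wσiAsc : ℕ → FreeMonoid (TBGen n)
  | 0 => 1
  | k + 1 => wσiAsc k * wσi n (k + 1)

/-- The defining relations of the tied braid monoid `TBₙᴮ` of type B. -/
inductive tbRel : FreeMonoid (TBGen n) → FreeMonoid (TBGen n) → Prop
  | sig_inv (i : ℕ) (h1 : 1 ≤ i) (h2 : i ≤ n - 1) :
      tbRel (wσ n i * wσi n i) 1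
  | inv_sig (i : ℕ) (h1 : 1 ≤ i) (h2 : i ≤ n - 1) :
      tbRel (wσi n i * wσ n i) 1
  | rho_inv : tbRel (wρ n * wρi n) 1
  | inv_rho : tbRel (wρi n * wρ n) 1
  | sig_comm (i j : ℕ) (h1 : 1 ≤ i) (h2 : i + 1 < j) (h3 : j ≤ n - 1) :
      tbRel (wσ n i * wσ n j) (wσ n j * wσ n i)
  | sig_braid (i : ℕ) (h1 : 1 ≤ i) (h2 : i + 1 ≤ n - 1) :
      tbRel (wσ n i * wσ n (i + 1) * wσ n i) (wσ n (i + 1) * wσ n i * wσ n (i + 1))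
  | rho_sig (i : ℕ) (h1 : 2 ≤ i) (h2 : i ≤ n - 1) :
      tbRel (wρ n * wσ n i) (wσ n i * wρ n)
  | rho_sig_rho_sig (h : 2 ≤ n) :
      tbRel (wρ n * wσ n 1 * wρ n * wσ n 1) (wσ n 1 * wρ n * wσ n 1 * wρ n)
  | eta_comm (i j : ℕ) (h1 : 1 ≤ i) (h2 : i ≤ n - 1) (h3 : 1 ≤ j) (h4 : j ≤ n - 1) :
      tbRel (wη n i * wη n j) (wη n j * wη n i)
  | eta_sig (i : ℕ) (h1 : 1 ≤ i) (h2 : i ≤ n - 1) :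
      tbRel (wη n i * wσ n i) (wσ n i * wη n i)
  | eta_sig_far (i j : ℕ) (h1 : 1 ≤ i) (h2 : i ≤ n - 1) (h3 : 1 ≤ j) (h4 : j ≤ n - 1)
      (h5 : i + 1 < j ∨ j + 1 < i) :
      tbRel (wη n i * wσ n j) (wσ n j * wη n i)
  | eta_sig_sig (i j : ℕ) (h1 : 1 ≤ i) (h2 : i ≤ n - 1) (h3 : 1 ≤ j) (h4 : j ≤ n - 1)
      (h5 : j = i + 1 ∨ i = j + 1) :
      tbRel (wη n i * wσ n j * wσ n i) (wσ n j * wσ n i * wη n j)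
  | eta_sig_sigInv (i j : ℕ) (h1 : 1 ≤ i) (h2 : i ≤ n - 1) (h3 : 1 ≤ j) (h4 : j ≤ n - 1)
      (h5 : j = i + 1 ∨ i = j + 1) :
      tbRel (wη n i * wσ n j * wσi n i) (wσ n j * wσi n i * wη n j)
  | eta_eta_sig (i j : ℕ) (h1 : 1 ≤ i) (h2 : i ≤ n - 1) (h3 : 1 ≤ j) (h4 : j ≤ n - 1)
      (h5 : j = i + 1 ∨ i = j + 1) :
      tbRel (wη n i * wη n j * wσ n i) (wσ n i * wη n i * wη n j)
  | eta_eta_sig' (i j : ℕ) (h1 : 1 ≤ i) (h2 : i ≤ n - 1) (h3 : 1 ≤ j) (h4 : j ≤ n - 1)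
      (h5 : j = i + 1 ∨ i = j + 1) :
      tbRel (wη n i * wη n j * wσ n i) (wη n j * wσ n i * wη n j)
  | eta_idem (i : ℕ) (h1 : 1 ≤ i) (h2 : i ≤ n - 1) :
      tbRel (wη n i * wη n i) (wη n i)
  | phi_idem : tbRel (wφ n * wφ n) (wφ n)
  | rho_eta (i : ℕ) (h1 : 1 ≤ i) (h2 : i ≤ n - 1) :
      tbRel (wρ n * wη n i) (wη n i * wρ n)
  | rho_phi : tbRel (wρ n * wφ n) (wφ n * wρ n)
  | phi_eta (i : ℕ) (h1 : 1 ≤ i) (h2 : i ≤ n - 1) :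
      tbRel (wφ n * wη n i) (wη n i * wφ n)
  | phi_sig (i : ℕ) (h1 : 2 ≤ i) (h2 : i ≤ n - 1) :
      tbRel (wφ n * wσ n i) (wσ n i * wφ n)
  | phi_move (i : ℕ) (h1 : 2 ≤ i) (h2 : i ≤ n) :
      tbRel (wσDesc n (i - 1) * wφ n * wσiAsc n (i - 1))
        (wσiDesc n (i - 1) * wφ n * wσAsc n (i - 1))
  | phi_eta_one (h : 2 ≤ n) :
      tbRel (wφ n * wη n 1) (wφ n * wσ n 1 * wφ n * wσi n 1)
  | phi_eta_one' (h : 2 ≤ n) :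
      tbRel (wφ n * wσ n 1 * wφ n * wσi n 1) (wσ n 1 * wφ n * wσi n 1 * wη n 1)

/-- The tied braid monoid of type B on `n` strands. -/
def TB : Type := (conGen (tbRel n)).Quotient

instance : Monoid (TB n) := inferInstanceAs (Monoid (conGen (tbRel n)).Quotient)

/-- The canonical projection from the free monoid on the generators onto `TBₙᴮ`. -/
def mk : FreeMonoid (TBGen n) →* TB n := Con.mk' _

/-- The generator `σᵢ` of `TBₙᴮ`. -/
def σB (i : ℕ) : TB n := mk n (wσ n i)

/-- The generator `σᵢ⁻¹` of `TBₙᴮ`. -/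
def σiB (i : ℕ) : TB n := mk n (wσi n i)

/-- The generator `ρ₁` of `TBₙᴮ`. -/
def ρB : TB n := mk n (wρ n)

/-- The generator `ρ₁⁻¹` of `TBₙᴮ`. -/
def ρiB : TB n := mk n (wρi n)

/-- The generator `φ₁` of `TBₙᴮ`. -/
def φB : TB n := mk n (wφ n)

/-- The generator `ηᵢ` of `TBₙᴮ`. -/
def ηB (i : ℕ) : TB n := mk n (wη n i)

/-- The word `σᵢ σᵢ₊₁ ⋯ σₖ` (empty if `k < i`). -/
def wσRange (i k : ℕ) : FreeMonoid (TBGen n) :=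
  ((List.range' i (k + 1 - i)).map (wσ n)).prod

/-- The word `σₖ⁻¹ σₖ₋₁⁻¹ ⋯ σᵢ⁻¹` (empty if `k < i`). -/
def wσiRangeRev (i k : ℕ) : FreeMonoid (TBGen n) :=
  ((List.range' i (k + 1 - i)).reverse.map (wσi n)).prod

/-- The word representing the generalized tie `η_{i,j}`:
`σᵢ ⋯ σ_{j-2} η_{j-1} σ_{j-2}⁻¹ ⋯ σᵢ⁻¹` for `i < j`, with the conventions
`η_{i,i} = 1` and `η_{j,i} = η_{i,j}`. -/
def wηg (i j : ℕ) : FreeMonoid (TBGen n) :=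
  if i = j then 1
  else wσRange n (min i j) (max i j - 2) * wη n (max i j - 1) *
    wσiRangeRev n (min i j) (max i j - 2)

/-- The word representing the generalized tie `φⱼ = σ_{j-1} ⋯ σ₁ φ₁ σ₁⁻¹ ⋯ σ_{j-1}⁻¹`. -/
def wφg (j : ℕ) : FreeMonoid (TBGen n) :=
  wσDesc n (j - 1) * wφ n * wσiAsc n (j - 1)

/-- The generalized tie `η_{i,j}` joining the `i`-th and `j`-th moving strands. -/
def ηg (i j : ℕ) : TB n := mk n (wηg n i j)

/-- The generalized tie `φⱼ` joining the fixed strand and the `j`-th moving strand. -/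
def φg (j : ℕ) : TB n := mk n (wφg n j)

end TiedBraidB

/-! The bt-algebra of type B, `Eₙᴮ(u,v)`, presented by generators and relations. -/

/-- Generators of the bt-algebra of type B: `B` is `B₁`, `T i` is `T_{i+1}`,
`F i` is `F_{i+1}` and `E i` is `E_{i+1}`. -/
inductive BtGen (n : ℕ) : Type
  | B : BtGen n
  | T : Fin (n - 1) → BtGen n
  | F : Fin n → BtGen n
  | E : Fin (n - 1) → BtGen n

namespace BtAlgebraB

variable (K : Type*) [Field K] (u v : K) (n : ℕ)

/-- The free-algebra element `Tᵢ` (for `1 ≤ i ≤ n-1`; junk value `0` otherwise). -/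
def fT (i : ℕ) : FreeAlgebra K (BtGen n) :=
  if h : 1 ≤ i ∧ i ≤ n - 1 then FreeAlgebra.ι K (BtGen.T ⟨i - 1, by omega⟩) else 0

/-- The free-algebra element `Eᵢ`. -/
def fE (i : ℕ) : FreeAlgebra K (BtGen n) :=
  if h : 1 ≤ i ∧ i ≤ n - 1 then FreeAlgebra.ι K (BtGen.E ⟨i - 1, by omega⟩) else 0

/-- The free-algebra element `Fᵢ` (for `1 ≤ i ≤ n`). -/
def fF (i : ℕ) : FreeAlgebra K (BtGen n) :=
  if h : 1 ≤ i ∧ i ≤ n then FreeAlgebra.ι K (BtGen.F ⟨i - 1, by omega⟩) else 0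

/-- The free-algebra element `B₁`. -/
def fB : FreeAlgebra K (BtGen n) := FreeAlgebra.ι K BtGen.B

/-- The defining relations of the bt-algebra `Eₙᴮ(u,v)` of type B. -/
inductive btRel : FreeAlgebra K (BtGen n) → FreeAlgebra K (BtGen n) → Prop
  | T_comm (i j : ℕ) (h1 : 1 ≤ i) (h2 : i + 1 < j) (h3 : j ≤ n - 1) :
      btRel (fT K n i * fT K n j) (fT K n j * fT K n i)
  | T_braid (i : ℕ) (h1 : 1 ≤ i) (h2 : i + 1 ≤ n - 1) :
      btRel (fT K n i * fT K n (i + 1) * fT K n i)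
        (fT K n (i + 1) * fT K n i * fT K n (i + 1))
  | T_sq (i : ℕ) (h1 : 1 ≤ i) (h2 : i ≤ n - 1) :
      btRel (fT K n i * fT K n i)
        (1 + algebraMap K (FreeAlgebra K (BtGen n)) (u - u⁻¹) * (fE K n i * fT K n i))
  | E_idem (i : ℕ) (h1 : 1 ≤ i) (h2 : i ≤ n - 1) :
      btRel (fE K n i * fE K n i) (fE K n i)
  | E_comm (i j : ℕ) (h1 : 1 ≤ i) (h2 : i ≤ n - 1) (h3 : 1 ≤ j) (h4 : j ≤ n - 1) :
      btRel (fE K n i * fE K n j) (fE K n j * fE K n i)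
  | E_T (i : ℕ) (h1 : 1 ≤ i) (h2 : i ≤ n - 1) :
      btRel (fE K n i * fT K n i) (fT K n i * fE K n i)
  | E_T_far (i j : ℕ) (h1 : 1 ≤ i) (h2 : i ≤ n - 1) (h3 : 1 ≤ j) (h4 : j ≤ n - 1)
      (h5 : i + 1 < j ∨ j + 1 < i) :
      btRel (fE K n i * fT K n j) (fT K n j * fE K n i)
  | E_E_T (i j : ℕ) (h1 : 1 ≤ i) (h2 : i ≤ n - 1) (h3 : 1 ≤ j) (h4 : j ≤ n - 1)
      (h5 : j = i + 1 ∨ i = j + 1) :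
      btRel (fE K n i * fE K n j * fT K n i) (fT K n i * fE K n i * fE K n j)
  | E_E_T' (i j : ℕ) (h1 : 1 ≤ i) (h2 : i ≤ n - 1) (h3 : 1 ≤ j) (h4 : j ≤ n - 1)
      (h5 : j = i + 1 ∨ i = j + 1) :
      btRel (fE K n i * fE K n j * fT K n i) (fE K n j * fT K n i * fE K n j)
  | E_T_T (i j : ℕ) (h1 : 1 ≤ i) (h2 : i ≤ n - 1) (h3 : 1 ≤ j) (h4 : j ≤ n - 1)
      (h5 : j = i + 1 ∨ i = j + 1) :
      btRel (fE K n i * fT K n j * fT K n i) (fT K n j * fT K n i * fE K n j)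
  | B_T_B_T (h : 2 ≤ n) :
      btRel (fB K n * fT K n 1 * fB K n * fT K n 1)
        (fT K n 1 * fB K n * fT K n 1 * fB K n)
  | B_T (i : ℕ) (h1 : 2 ≤ i) (h2 : i ≤ n - 1) :
      btRel (fB K n * fT K n i) (fT K n i * fB K n)
  | B_sq :
      btRel (fB K n * fB K n)
        (1 + algebraMap K (FreeAlgebra K (BtGen n)) (v - v⁻¹) * (fF K n 1 * fB K n))
  | B_E (i : ℕ) (h1 : 1 ≤ i) (h2 : i ≤ n - 1) :
      btRel (fB K n * fE K n i) (fE K n i * fB K n)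
  | F_idem (i : ℕ) (h1 : 1 ≤ i) (h2 : i ≤ n) :
      btRel (fF K n i * fF K n i) (fF K n i)
  | B_F (j : ℕ) (h1 : 1 ≤ j) (h2 : j ≤ n) :
      btRel (fB K n * fF K n j) (fF K n j * fB K n)
  | F_E (i j : ℕ) (h1 : 1 ≤ i) (h2 : i ≤ n) (h3 : 1 ≤ j) (h4 : j ≤ n - 1) :
      btRel (fF K n i * fE K n j) (fE K n j * fF K n i)
  | F_T (i j : ℕ) (h1 : 1 ≤ i) (h2 : i ≤ n - 1) (h3 : 1 ≤ j) (h4 : j ≤ n) :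
      btRel (fF K n j * fT K n i)
        (fT K n i * fF K n (if j = i then i + 1 else if j = i + 1 then i else j))
  | E_F (i : ℕ) (h1 : 1 ≤ i) (h2 : i ≤ n - 1) :
      btRel (fE K n i * fF K n i) (fF K n i * fF K n (i + 1))
  | E_F' (i : ℕ) (h1 : 1 ≤ i) (h2 : i ≤ n - 1) :
      btRel (fF K n i * fF K n (i + 1)) (fE K n i * fF K n (i + 1))

/-- The bt-algebra `Eₙᴮ(u,v)` of type B. -/
abbrev BtB := RingQuot (btRel K u v n)

/-- The canonical projection onto `Eₙᴮ(u,v)`. -/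
def mkBt : FreeAlgebra K (BtGen n) →ₐ[K] BtB K u v n := RingQuot.mkAlgHom K _

/-- The generator `Tᵢ` of `Eₙᴮ(u,v)`. -/
def genT (i : ℕ) : BtB K u v n := mkBt K u v n (fT K n i)

/-- The generator `Eᵢ` of `Eₙᴮ(u,v)`. -/
def genE (i : ℕ) : BtB K u v n := mkBt K u v n (fE K n i)

/-- The generator `Fᵢ` of `Eₙᴮ(u,v)`. -/
def genF (i : ℕ) : BtB K u v n := mkBt K u v n (fF K n i)

/-- The generator `B₁` of `Eₙᴮ(u,v)`. -/
def genB : BtB K u v n := mkBt K u v n (fB K n)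

/-- The element `Tᵢ⁻¹ = Tᵢ - (u - u⁻¹) Eᵢ` of `Eₙᴮ(u,v)`. -/
def genTinv (i : ℕ) : BtB K u v n :=
  genT K u v n i - algebraMap K (BtB K u v n) (u - u⁻¹) * genE K u v n i

end BtAlgebraB

/-!
The candidates for `Tᵢ⁻¹` and `B₁⁻¹` are genuine inverses because the quadratic relations have the
shape `x² = 1 + d x` with `d` commuting with `x`, whence `x (x - d) = (x - d) x = 1`. Most of the
remaining relations of `TBₙᴮ` are relations of `Eₙᴮ(u,v)`; those that are not involve `σᵢ⁻¹`.
The one between ties and mixed products holds because `Tⱼ Tᵢ⁻¹` is a linear combination of `Tⱼ Tᵢ`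
and `Tⱼ Eᵢ`, both of which intertwine `Eⱼ` with `Eᵢ`. For those containing `φ₁`, conjugation by
either `Tᵢ` or `Tᵢ⁻¹` sends `Fᵢ` to `Fᵢ₊₁`, so both sides of the relation moving `φ₁` to the
`i`-th strand are sent to `Fᵢ`.
-/

section QuadraticInverse

variable {A : Type*} [Ring A] {x d : A}

theorem sub_mul_self_eq_one_of_mul_self_eq (h : x * x = 1 + d * x) : (x - d) * x = 1 := by
  rw [sub_mul, h, add_sub_cancel_right]

theorem mul_sub_self_eq_one_of_mul_self_eq (h : x * x = 1 + d * x) (hd : Commute d x) :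
    x * (x - d) = 1 := by
  rw [mul_sub, h, hd.eq, add_sub_cancel_right]

end QuadraticInverse

namespace TiedBraidB

variable {n : ℕ} {M : Type*} [Monoid M]

/-- The universal property of the presentation of `TBₙᴮ`: a homomorphism on words that respects
the defining relations descends to the tied braid monoid. -/
def lift (f : FreeMonoid (TBGen n) →* M) (hf : ∀ a b, tbRel n a b → f a = f b) : TB n →* M :=
  Con.lift (conGen (tbRel n)) f (Con.conGen_le.2 hf)

theorem lift_mk (f : FreeMonoid (TBGen n) →* M) (hf : ∀ a b, tbRel n a b → f a = f b)
    (w : FreeMonoid (TBGen n)) : lift f hf (mk n w) = f w :=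
  Con.lift_mk' _ w

theorem map_wσDesc_mul_wφ_mul_wσiAsc {f : FreeMonoid (TBGen n) →* M} {x : ℕ → M}
    (hφ : f (wφ n) = x 1)
    (hσ : ∀ i, 1 ≤ i → i ≤ n - 1 → f (wσ n i) * x i * f (wσi n i) = x (i + 1))
    {k : ℕ} (hk : k ≤ n - 1) : f (wσDesc n k * wφ n * wσiAsc n k) = x (k + 1) := by
  induction k with
  | zero => simpa [wσDesc, wσiAsc] using hφ
  | succ k ih =>
    rw [← hσ (k + 1) (by omega) hk, ← ih (by omega), wσDesc, wσiAsc]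
    simp only [map_mul, mul_assoc]

theorem map_wσiDesc_mul_wφ_mul_wσAsc {f : FreeMonoid (TBGen n) →* M} {x : ℕ → M}
    (hφ : f (wφ n) = x 1)
    (hσ : ∀ i, 1 ≤ i → i ≤ n - 1 → f (wσi n i) * x i * f (wσ n i) = x (i + 1))
    {k : ℕ} (hk : k ≤ n - 1) : f (wσiDesc n k * wφ n * wσAsc n k) = x (k + 1) := by
  induction k with
  | zero => simpa [wσiDesc, wσAsc] using hφ
  | succ k ih =>
    rw [← hσ (k + 1) (by omega) hk, ← ih (by omega), wσiDesc, wσAsc]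
    simp only [map_mul, mul_assoc]

end TiedBraidB

namespace BtAlgebraB

section Relations

variable {K : Type*} [Field K] (u v : K) {n : ℕ} {i j : ℕ}

theorem mkBt_eq_of_btRel {a b : FreeAlgebra K (BtGen n)} (h : btRel K u v n a b) :
    mkBt K u v n a = mkBt K u v n b :=
  RingQuot.mkAlgHom_rel K h

variable {u v}

theorem commute_genT_genT (hi : 1 ≤ i) (hij : i + 1 < j) (hj : j ≤ n - 1) :
    Commute (genT K u v n i) (genT K u v n j) := by
  simpa only [Commute, SemiconjBy, genT, map_mul] using mkBt_eq_of_btRel u v (.T_comm i j hi hij hj)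

theorem genT_braid (hi : 1 ≤ i) (hi' : i + 1 ≤ n - 1) :
    genT K u v n i * genT K u v n (i + 1) * genT K u v n i =
      genT K u v n (i + 1) * genT K u v n i * genT K u v n (i + 1) := by
  simpa only [genT, map_mul] using mkBt_eq_of_btRel u v (.T_braid i hi hi')

theorem genT_mul_self (hi : 1 ≤ i) (hi' : i ≤ n - 1) :
    genT K u v n i * genT K u v n i =
      1 + algebraMap K (BtB K u v n) (u - u⁻¹) * genE K u v n i * genT K u v n i := by
  simpa only [genT, genE, map_mul, map_add, map_one, AlgHom.commutes, ← mul_assoc] using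
    mkBt_eq_of_btRel u v (.T_sq i hi hi')

theorem isIdempotentElem_genE (hi : 1 ≤ i) (hi' : i ≤ n - 1) :
    IsIdempotentElem (genE K u v n i) := by
  simpa only [IsIdempotentElem, genE, map_mul] using mkBt_eq_of_btRel u v (.E_idem i hi hi')

theorem commute_genE_genE (hi : 1 ≤ i) (hi' : i ≤ n - 1) (hj : 1 ≤ j) (hj' : j ≤ n - 1) :
    Commute (genE K u v n i) (genE K u v n j) := by
  simpa only [Commute, SemiconjBy, genE, map_mul] using
    mkBt_eq_of_btRel u v (.E_comm i j hi hi' hj hj')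

theorem commute_genE_genT_self (hi : 1 ≤ i) (hi' : i ≤ n - 1) :
    Commute (genE K u v n i) (genT K u v n i) := by
  simpa only [Commute, SemiconjBy, genT, genE, map_mul] using mkBt_eq_of_btRel u v (.E_T i hi hi')

theorem commute_genE_genT_of_far (hi : 1 ≤ i) (hi' : i ≤ n - 1) (hj : 1 ≤ j) (hj' : j ≤ n - 1)
    (hij : i + 1 < j ∨ j + 1 < i) : Commute (genE K u v n i) (genT K u v n j) := by
  simpa only [Commute, SemiconjBy, genT, genE, map_mul] using
    mkBt_eq_of_btRel u v (.E_T_far i j hi hi' hj hj' hij)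

theorem genE_mul_genE_mul_genT (hi : 1 ≤ i) (hi' : i ≤ n - 1) (hj : 1 ≤ j) (hj' : j ≤ n - 1)
    (hij : j = i + 1 ∨ i = j + 1) :
    genE K u v n i * genE K u v n j * genT K u v n i =
      genT K u v n i * genE K u v n i * genE K u v n j := by
  simpa only [genT, genE, map_mul] using mkBt_eq_of_btRel u v (.E_E_T i j hi hi' hj hj' hij)

theorem genE_mul_genE_mul_genT' (hi : 1 ≤ i) (hi' : i ≤ n - 1) (hj : 1 ≤ j) (hj' : j ≤ n - 1)
    (hij : j = i + 1 ∨ i = j + 1) :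
    genE K u v n i * genE K u v n j * genT K u v n i =
      genE K u v n j * genT K u v n i * genE K u v n j := by
  simpa only [genT, genE, map_mul] using mkBt_eq_of_btRel u v (.E_E_T' i j hi hi' hj hj' hij)

theorem semiconjBy_genT_mul_genT (hi : 1 ≤ i) (hi' : i ≤ n - 1) (hj : 1 ≤ j) (hj' : j ≤ n - 1)
    (hij : j = i + 1 ∨ i = j + 1) :
    SemiconjBy (genT K u v n j * genT K u v n i) (genE K u v n j) (genE K u v n i) := by
  simpa only [SemiconjBy, genT, genE, map_mul, mul_assoc] using
    (mkBt_eq_of_btRel u v (.E_T_T i j hi hi' hj hj' hij)).symm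

theorem genB_genT_braid (hn : 2 ≤ n) :
    genB K u v n * genT K u v n 1 * genB K u v n * genT K u v n 1 =
      genT K u v n 1 * genB K u v n * genT K u v n 1 * genB K u v n := by
  simpa only [genB, genT, map_mul] using mkBt_eq_of_btRel u v (.B_T_B_T hn)

theorem commute_genB_genT (hi : 2 ≤ i) (hi' : i ≤ n - 1) :
    Commute (genB K u v n) (genT K u v n i) := by
  simpa only [Commute, SemiconjBy, genB, genT, map_mul] using mkBt_eq_of_btRel u v (.B_T i hi hi')

theorem genB_mul_self :
    genB K u v n * genB K u v n =
      1 + algebraMap K (BtB K u v n) (v - v⁻¹) * genF K u v n 1 * genB K u v n := by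
  simpa only [genB, genF, map_mul, map_add, map_one, AlgHom.commutes, ← mul_assoc] using
    mkBt_eq_of_btRel (n := n) u v .B_sq

theorem commute_genB_genE (hi : 1 ≤ i) (hi' : i ≤ n - 1) :
    Commute (genB K u v n) (genE K u v n i) := by
  simpa only [Commute, SemiconjBy, genB, genE, map_mul] using mkBt_eq_of_btRel u v (.B_E i hi hi')

theorem genF_eq_zero (hj : ¬(1 ≤ j ∧ j ≤ n)) : genF K u v n j = 0 := by
  rw [genF, fF, dif_neg hj, map_zero]

-- The junk case is needed: `TB 0` still has the generator `φ₁`, which is sent to `F₁ = 0`.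
theorem isIdempotentElem_genF : IsIdempotentElem (genF K u v n j) := by
  by_cases hj : 1 ≤ j ∧ j ≤ n
  · simpa only [IsIdempotentElem, genF, map_mul] using mkBt_eq_of_btRel u v (.F_idem j hj.1 hj.2)
  · rw [genF_eq_zero hj]
    exact IsIdempotentElem.zero

theorem commute_genB_genF : Commute (genB K u v n) (genF K u v n j) := by
  by_cases hj : 1 ≤ j ∧ j ≤ n
  · simpa only [Commute, SemiconjBy, genB, genF, map_mul] using
      mkBt_eq_of_btRel u v (.B_F j hj.1 hj.2)
  · rw [genF_eq_zero hj]
    exact Commute.zero_right _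

theorem commute_genF_genE (hi : 1 ≤ i) (hi' : i ≤ n) (hj : 1 ≤ j) (hj' : j ≤ n - 1) :
    Commute (genF K u v n i) (genE K u v n j) := by
  simpa only [Commute, SemiconjBy, genE, genF, map_mul] using
    mkBt_eq_of_btRel u v (.F_E i j hi hi' hj hj')

theorem semiconjBy_genT_genF (hi : 1 ≤ i) (hi' : i ≤ n - 1) (hj : 1 ≤ j) (hj' : j ≤ n) :
    SemiconjBy (genT K u v n i) (genF K u v n (Equiv.swap i (i + 1) j)) (genF K u v n j) := by
  rw [Equiv.swap_apply_def]
  simpa only [SemiconjBy, genT, genF, map_mul] using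
    (mkBt_eq_of_btRel u v (.F_T i j hi hi' hj hj')).symm

theorem genE_mul_genF (hi : 1 ≤ i) (hi' : i ≤ n - 1) :
    genE K u v n i * genF K u v n i = genF K u v n i * genF K u v n (i + 1) := by
  simpa only [genE, genF, map_mul] using mkBt_eq_of_btRel u v (.E_F i hi hi')

theorem genE_mul_genF_succ (hi : 1 ≤ i) (hi' : i ≤ n - 1) :
    genE K u v n i * genF K u v n (i + 1) = genF K u v n i * genF K u v n (i + 1) := by
  simpa only [genE, genF, map_mul] using (mkBt_eq_of_btRel u v (.E_F' i hi hi')).symm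

end Relations

section Inverses

variable {K : Type*} [Field K] {u v : K} {n : ℕ} {i j : ℕ}

theorem genT_mul_genTinv (hi : 1 ≤ i) (hi' : i ≤ n - 1) :
    genT K u v n i * genTinv K u v n i = 1 :=
  mul_sub_self_eq_one_of_mul_self_eq (genT_mul_self hi hi')
    ((Algebra.commute_algebraMap_left _ _).mul_left (commute_genE_genT_self hi hi'))

theorem genTinv_mul_genT (hi : 1 ≤ i) (hi' : i ≤ n - 1) :
    genTinv K u v n i * genT K u v n i = 1 :=
  sub_mul_self_eq_one_of_mul_self_eq (genT_mul_self hi hi')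

variable (K u v n) in
/-- The element `B₁⁻¹ = B₁ - (v - v⁻¹) F₁` of `Eₙᴮ(u,v)`, the image of `ρ₁⁻¹`. -/
def genBinv : BtB K u v n :=
  genB K u v n - algebraMap K (BtB K u v n) (v - v⁻¹) * genF K u v n 1

theorem genB_mul_genBinv : genB K u v n * genBinv K u v n = 1 :=
  mul_sub_self_eq_one_of_mul_self_eq genB_mul_self
    ((Algebra.commute_algebraMap_left _ _).mul_left commute_genB_genF.symm)

theorem genBinv_mul_genB : genBinv K u v n * genB K u v n = 1 :=
  sub_mul_self_eq_one_of_mul_self_eq genB_mul_self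

theorem semiconjBy_genT_mul_genE (hi : 1 ≤ i) (hi' : i ≤ n - 1) (hj : 1 ≤ j) (hj' : j ≤ n - 1)
    (hij : j = i + 1 ∨ i = j + 1) :
    SemiconjBy (genT K u v n j * genE K u v n i) (genE K u v n j) (genE K u v n i) :=
  calc genT K u v n j * genE K u v n i * genE K u v n j
    _ = genT K u v n j * genE K u v n j * genE K u v n i := by
      rw [mul_assoc, (commute_genE_genE hi hi' hj hj').eq, mul_assoc]
    _ = genE K u v n i * genT K u v n j * genE K u v n i := by
      rw [← genE_mul_genE_mul_genT hj hj' hi hi' hij.symm,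
        genE_mul_genE_mul_genT' hj hj' hi hi' hij.symm]
    _ = genE K u v n i * (genT K u v n j * genE K u v n i) := mul_assoc _ _ _

theorem semiconjBy_genT_mul_genTinv (hi : 1 ≤ i) (hi' : i ≤ n - 1) (hj : 1 ≤ j)
    (hj' : j ≤ n - 1) (hij : j = i + 1 ∨ i = j + 1) :
    SemiconjBy (genT K u v n j * genTinv K u v n i) (genE K u v n j) (genE K u v n i) := by
  have expand : genT K u v n j * genTinv K u v n i = genT K u v n j * genT K u v n i -
      algebraMap K (BtB K u v n) (u - u⁻¹) * (genT K u v n j * genE K u v n i) := by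
    rw [genTinv, mul_sub, Algebra.left_comm]
  rw [expand]
  exact (semiconjBy_genT_mul_genT hi hi' hj hj' hij).sub_left
    (SemiconjBy.mul_left (Algebra.commute_algebraMap_left _ _)
      (semiconjBy_genT_mul_genE hi hi' hj hj' hij))

theorem commute_genF_genT (hi : 1 ≤ i) (hi' : i ≤ n - 1) (hj : 1 ≤ j) (hj' : j ≤ n)
    (hji : j ≠ i) (hji' : j ≠ i + 1) : Commute (genF K u v n j) (genT K u v n i) := by
  have h := semiconjBy_genT_genF (u := u) (v := v) hi hi' hj hj'
  rw [Equiv.swap_apply_of_ne_of_ne hji hji'] at h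
  exact Commute.symm h

theorem genT_mul_genF_mul_genTinv (hi : 1 ≤ i) (hi' : i ≤ n - 1) :
    genT K u v n i * genF K u v n i * genTinv K u v n i = genF K u v n (i + 1) := by
  have h := semiconjBy_genT_genF (u := u) (v := v) (j := i + 1) hi hi' (by omega) (by omega)
  rw [Equiv.swap_apply_right] at h
  rw [h.eq, mul_assoc, genT_mul_genTinv hi hi', mul_one]

theorem genTinv_mul_genF_mul_genT (hi : 1 ≤ i) (hi' : i ≤ n - 1) :
    genTinv K u v n i * genF K u v n i * genT K u v n i = genF K u v n (i + 1) := by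
  have h := semiconjBy_genT_genF (u := u) (v := v) (j := i) hi hi' hi (by omega)
  rw [Equiv.swap_apply_left] at h
  rw [mul_assoc, ← h.eq, ← mul_assoc, genTinv_mul_genT hi hi', one_mul]

theorem genF_mul_genT_mul_genF_mul_genTinv (hi : 1 ≤ i) (hi' : i ≤ n - 1) :
    genF K u v n i * genT K u v n i * genF K u v n i * genTinv K u v n i =
      genF K u v n i * genF K u v n (i + 1) := by
  rw [← genT_mul_genF_mul_genTinv hi hi']
  simp only [mul_assoc]

theorem genF_mul_genE_eq_genF_mul_genT_mul_genF_mul_genTinv (hi : 1 ≤ i) (hi' : i ≤ n - 1) :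
    genF K u v n i * genE K u v n i =
      genF K u v n i * genT K u v n i * genF K u v n i * genTinv K u v n i := by
  rw [genF_mul_genT_mul_genF_mul_genTinv hi hi',
    (commute_genF_genE hi (by omega) hi hi').eq, genE_mul_genF hi hi']

theorem genF_mul_genT_mul_genF_mul_genTinv_eq_mul_genE (hi : 1 ≤ i) (hi' : i ≤ n - 1) :
    genF K u v n i * genT K u v n i * genF K u v n i * genTinv K u v n i =
      genT K u v n i * genF K u v n i * genTinv K u v n i * genE K u v n i := by
  rw [genF_mul_genT_mul_genF_mul_genTinv hi hi', genT_mul_genF_mul_genTinv hi hi',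
    (commute_genF_genE (by omega) (by omega) hi hi').eq, genE_mul_genF_succ hi hi']

end Inverses

section Representation

open TiedBraidB

variable (K : Type*) [Field K] (u v : K) (n : ℕ)

/-- The prescribed images in `Eₙᴮ(u,v)` of the generators of `TBₙᴮ`. The index shift is that of
`TBGen`, whose constructor argument `i` stands for the strand `i + 1`. -/
def repGen : TBGen n → BtB K u v n
  | .sig i => genT K u v n (i + 1)
  | .sigInv i => genTinv K u v n (i + 1)
  | .rho => genB K u v n
  | .rhoInv => genBinv K u v n
  | .phi => genF K u v n 1
  | .eta i => genE K u v n (i + 1)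

/-- The extension of `repGen` to words in the generators of `TBₙᴮ`. -/
def repWord : FreeMonoid (TBGen n) →* BtB K u v n := FreeMonoid.lift (repGen K u v n)

variable {K u v n} {i : ℕ}

theorem repWord_wσ (hi : 1 ≤ i) (hi' : i ≤ n - 1) :
    repWord K u v n (wσ n i) = genT K u v n i := by
  simp [wσ, repWord, repGen, hi, hi']

theorem repWord_wσi (hi : 1 ≤ i) (hi' : i ≤ n - 1) :
    repWord K u v n (wσi n i) = genTinv K u v n i := by
  simp [wσi, repWord, repGen, hi, hi']

theorem repWord_wη (hi : 1 ≤ i) (hi' : i ≤ n - 1) :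
    repWord K u v n (wη n i) = genE K u v n i := by
  simp [wη, repWord, repGen, hi, hi']

theorem repWord_wρ : repWord K u v n (wρ n) = genB K u v n :=
  FreeMonoid.lift_eval_of _ _

theorem repWord_wρi : repWord K u v n (wρi n) = genBinv K u v n :=
  FreeMonoid.lift_eval_of _ _

theorem repWord_wφ : repWord K u v n (wφ n) = genF K u v n 1 :=
  FreeMonoid.lift_eval_of _ _

theorem repWord_wσDesc_mul_wφ_mul_wσiAsc {k : ℕ} (hk : k ≤ n - 1) :
    repWord K u v n (wσDesc n k * wφ n * wσiAsc n k) = genF K u v n (k + 1) := by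
  refine map_wσDesc_mul_wφ_mul_wσiAsc repWord_wφ (fun i hi hi' ↦ ?_) hk
  rw [repWord_wσ hi hi', repWord_wσi hi hi', genT_mul_genF_mul_genTinv hi hi']

theorem repWord_wσiDesc_mul_wφ_mul_wσAsc {k : ℕ} (hk : k ≤ n - 1) :
    repWord K u v n (wσiDesc n k * wφ n * wσAsc n k) = genF K u v n (k + 1) := by
  refine map_wσiDesc_mul_wφ_mul_wσAsc repWord_wφ (fun i hi hi' ↦ ?_) hk
  rw [repWord_wσ hi hi', repWord_wσi hi hi', genTinv_mul_genF_mul_genT hi hi']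

theorem repWord_eq_of_tbRel (a b : FreeMonoid (TBGen n)) (h : tbRel n a b) :
    repWord K u v n a = repWord K u v n b := by
  cases h
  case phi_move i hi hi' =>
    rw [repWord_wσDesc_mul_wφ_mul_wσiAsc (by omega), repWord_wσiDesc_mul_wφ_mul_wσAsc (by omega)]
  all_goals
    simp (disch := omega) only [map_mul, map_one, repWord_wσ, repWord_wσi, repWord_wη,
      repWord_wρ, repWord_wρi, repWord_wφ]
  case sig_inv i hi hi' => exact genT_mul_genTinv hi hi'
  case inv_sig i hi hi' => exact genTinv_mul_genT hi hi'
  case rho_inv => exact genB_mul_genBinv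
  case inv_rho => exact genBinv_mul_genB
  case sig_comm i j hi hij hj => exact commute_genT_genT hi hij hj
  case sig_braid i hi hi' => exact genT_braid hi hi'
  case rho_sig i hi hi' => exact commute_genB_genT hi hi'
  case rho_sig_rho_sig hn => exact genB_genT_braid hn
  case eta_comm i j hi hi' hj hj' => exact commute_genE_genE hi hi' hj hj'
  case eta_sig i hi hi' => exact commute_genE_genT_self hi hi'
  case eta_sig_far i j hi hi' hj hj' hij => exact commute_genE_genT_of_far hi hi' hj hj' hij
  case eta_sig_sig i j hi hi' hj hj' hij =>
    rw [(semiconjBy_genT_mul_genT hi hi' hj hj' hij).eq, mul_assoc]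
  case eta_sig_sigInv i j hi hi' hj hj' hij =>
    rw [(semiconjBy_genT_mul_genTinv hi hi' hj hj' hij).eq, mul_assoc]
  case eta_eta_sig i j hi hi' hj hj' hij => exact genE_mul_genE_mul_genT hi hi' hj hj' hij
  case eta_eta_sig' i j hi hi' hj hj' hij => exact genE_mul_genE_mul_genT' hi hi' hj hj' hij
  case eta_idem i hi hi' => exact isIdempotentElem_genE hi hi'
  case phi_idem => exact isIdempotentElem_genF
  case rho_eta i hi hi' => exact commute_genB_genE hi hi'
  case rho_phi => exact commute_genB_genF
  case phi_eta i hi hi' => exact commute_genF_genE le_rfl (by omega) hi hi'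
  case phi_sig i hi hi' =>
    exact commute_genF_genT (by omega) hi' le_rfl (by omega) (by omega) (by omega)
  case phi_eta_one hn =>
    exact genF_mul_genE_eq_genF_mul_genT_mul_genF_mul_genTinv le_rfl (by omega)
  case phi_eta_one' hn =>
    exact genF_mul_genT_mul_genF_mul_genTinv_eq_mul_genE le_rfl (by omega)

variable (K u v n) in
/-- The representation `θ : TBₙᴮ → Eₙᴮ(u,v)` of the tied braid monoid in the bt-algebra. -/
def tiedBraidRep : TB n →* BtB K u v n := lift (repWord K u v n) repWord_eq_of_tbRel

theorem tiedBraidRep_mk (w : FreeMonoid (TBGen n)) :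
    tiedBraidRep K u v n (mk n w) = repWord K u v n w :=
  lift_mk _ _ w

end Representation

end BtAlgebraB

open TiedBraidB BtAlgebraB in
/-- There exists a monoid homomorphism `θ` from the tied braid
monoid `TBₙᴮ` of type B to the multiplicative monoid of the bt-algebra `Eₙᴮ(u,v)`
of type B determined by `θ(σᵢ) = Tᵢ`, `θ(σᵢ⁻¹) = Tᵢ - (u - u⁻¹)Eᵢ`, `θ(ρ₁) = B₁`,
`θ(ρ₁⁻¹) = B₁ - (v - v⁻¹)F₁`, `θ(ηᵢ) = Eᵢ` and `θ(φ₁) = F₁`. -/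
theorem exists_representation (K : Type*) [Field K] (u v : K) (hu : u ≠ 0) (hv : v ≠ 0)
    (n : ℕ) :
    ∃ θ : TB n →* BtB K u v n,
      (∀ (i : ℕ) (_h1 : 1 ≤ i) (_h2 : i ≤ n - 1), θ (σB n i) = genT K u v n i) ∧
      (∀ (i : ℕ) (_h1 : 1 ≤ i) (_h2 : i ≤ n - 1),
        θ (σiB n i) =
          genT K u v n i - algebraMap K (BtB K u v n) (u - u⁻¹) * genE K u v n i) ∧
      θ (ρB n) = genB K u v n ∧
      θ (ρiB n) =
        genB K u v n - algebraMap K (BtB K u v n) (v - v⁻¹) * genF K u v n 1 ∧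
      (∀ (i : ℕ) (_h1 : 1 ≤ i) (_h2 : i ≤ n - 1), θ (ηB n i) = genE K u v n i) ∧
      θ (φB n) = genF K u v n 1 := by
  exact ⟨tiedBraidRep K u v n,
    fun _ h1 h2 ↦ (tiedBraidRep_mk _).trans (repWord_wσ h1 h2),
    fun _ h1 h2 ↦ (tiedBraidRep_mk _).trans (repWord_wσi h1 h2),
    (tiedBraidRep_mk _).trans repWord_wρ,
    (tiedBraidRep_mk _).trans repWord_wρi,
    fun _ h1 h2 ↦ (tiedBraidRep_mk _).trans (repWord_wη h1 h2),
    (tiedBraidRep_mk _).trans repWord_wφ⟩
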